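/- arXiv:1902.09671 — 2 statements merged into one kernel-verified Lean document; each statement's English description precedes it below -/
import Mathlib

section
/- Let e, y : [0,∞) → ℝ^m be the input and output of a system that is output feedback passive with index ρ ∈ ℝ along the trajectory: there exists a differentiable nonnegative storage function V : [0,∞) → ℝ with V(0) = 0 and V′(t) ≤ ⟨e(t), y(t)⟩ − ρ‖y(t)‖² for all t ≥ 0. Then for every t > 0 such that ∫₀ᵗ ‖y(τ)‖² dτ > 0, the data-driven estimate ρ̄(t) = (∫₀ᵗ ⟨e(τ), y(τ)⟩ dτ)/(∫₀ᵗ ‖y(τ)‖² dτ) satisfies ρ̄(t) ≥ ρ; i.e., the estimate computed from any particular input-output trajectory is an over-estimate of the actual output feedback passivity index. -/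
open scoped RealInnerProductSpace

/-- The data-driven estimate `ρ̄(t) = (∫₀ᵗ ⟪e, y⟫)/(∫₀ᵗ ‖y‖²)` computed from any
particular input-output trajectory of a system that is output feedback passive
with index `ρ` (with storage function starting at zero energy) over-estimates
the actual OFP index: `ρ̄(t) ≥ ρ`. -/
theorem OFP_estimate_overestimates
    (m : ℕ) (ρ : ℝ)
    (e y : ℝ → EuclideanSpace ℝ (Fin m))
    (V V' : ℝ → ℝ)
    -- local integrability of the integrands
    (heyint : ∀ t : ℝ, IntervalIntegrable (fun τ => ⟪e τ, y τ⟫) MeasureTheory.volume 0 t)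
    (hyint : ∀ t : ℝ, IntervalIntegrable (fun τ => ‖y τ‖ ^ 2) MeasureTheory.volume 0 t)
    -- nonnegative differentiable storage function with zero initial energy
    (hV0 : V 0 = 0)
    (hVnonneg : ∀ t : ℝ, 0 ≤ t → 0 ≤ V t)
    (hVderiv : ∀ t : ℝ, 0 ≤ t → HasDerivAt V (V' t) t)
    -- OFP dissipation inequality along the trajectory
    (hdiss : ∀ t : ℝ, 0 ≤ t → V' t ≤ ⟪e t, y t⟫ - ρ * ‖y t‖ ^ 2) :
    ∀ t : ℝ, 0 < t → 0 < (∫ τ in (0 : ℝ)..t, ‖y τ‖ ^ 2) →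
      ρ ≤ (∫ τ in (0 : ℝ)..t, ⟪e τ, y τ⟫) / (∫ τ in (0 : ℝ)..t, ‖y τ‖ ^ 2) := by
  intro t ht hpos
  have hρint := (hyint t).const_mul ρ
  -- `V'` need not be integrable, so this is the one-sided fundamental theorem of calculus:
  -- it only requires an integrable upper bound for the derivative.
  have key : V t - V 0 ≤ ∫ τ in (0 : ℝ)..t, (⟪e τ, y τ⟫ - ρ * ‖y τ‖ ^ 2) :=
    intervalIntegral.sub_le_integral_of_hasDeriv_right_of_le ht.le
      (fun x hx => (hVderiv x hx.1).continuousAt.continuousWithinAt)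
      (fun x hx => (hVderiv x hx.1.le).hasDerivWithinAt)
      ((intervalIntegrable_iff_integrableOn_Icc_of_le ht.le).1 ((heyint t).sub hρint))
      (fun x hx => hdiss x hx.1.le)
  rw [intervalIntegral.integral_sub (heyint t) hρint,
    intervalIntegral.integral_const_mul] at key
  rw [le_div_iff₀ hpos]
  linarith [hVnonneg t ht.le]
end

section
/- Let e, y : [0,∞) → ℝ^m be the input and output of a system that is input feed-forward passive with index ν ∈ ℝ along the trajectory: there exists a differentiable nonnegative storage function V : [0,∞) → ℝ with V(0) = 0 and V′(t) ≤ ⟨e(t), y(t)⟩ − ν‖e(t)‖² for all t ≥ 0. Then for every t > 0 such that ∫₀ᵗ ‖e(τ)‖² dτ > 0, the data-driven estimate ν̄(t) = (∫₀ᵗ ⟨e(τ), y(τ)⟩ dτ)/(∫₀ᵗ ‖e(τ)‖² dτ) satisfies ν̄(t) ≥ ν; i.e., the estimate computed from any particular input-output trajectory is an over-estimate of the actual input feed-forward passivity index. -/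
/-!
Integrating the dissipation inequality over `[0, t]` and using `V 0 = 0 ≤ V t` gives
`0 ≤ ∫₀ᵗ ⟪e, y⟫ - ν ∫₀ᵗ ‖e‖²`; dividing by the positive input energy `∫₀ᵗ ‖e‖²` yields the bound.
-/

open scoped RealInnerProductSpace

/-- The data-driven estimate `ν̄(t) = (∫₀ᵗ ⟪e, y⟫)/(∫₀ᵗ ‖e‖²)` computed from any
particular input-output trajectory of a system that is input feed-forward
passive with index `ν` (with storage function starting at zero energy)
over-estimates the actual IFP index: `ν̄(t) ≥ ν`. -/
theorem IFP_estimate_overestimates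
    (m : ℕ) (ν : ℝ)
    (e y : ℝ → EuclideanSpace ℝ (Fin m))
    (V V' : ℝ → ℝ)
    -- local integrability of the integrands
    (heyint : ∀ t : ℝ, IntervalIntegrable (fun τ => ⟪e τ, y τ⟫) MeasureTheory.volume 0 t)
    (heint : ∀ t : ℝ, IntervalIntegrable (fun τ => ‖e τ‖ ^ 2) MeasureTheory.volume 0 t)
    -- nonnegative differentiable storage function with zero initial energy
    (hV0 : V 0 = 0)
    (hVnonneg : ∀ t : ℝ, 0 ≤ t → 0 ≤ V t)
    (hVderiv : ∀ t : ℝ, 0 ≤ t → HasDerivAt V (V' t) t)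
    -- IFP dissipation inequality along the trajectory
    (hdiss : ∀ t : ℝ, 0 ≤ t → V' t ≤ ⟪e t, y t⟫ - ν * ‖e t‖ ^ 2) :
    ∀ t : ℝ, 0 < t → 0 < (∫ τ in (0 : ℝ)..t, ‖e τ‖ ^ 2) →
      ν ≤ (∫ τ in (0 : ℝ)..t, ⟪e τ, y τ⟫) / (∫ τ in (0 : ℝ)..t, ‖e τ‖ ^ 2) := by
  intro t ht hpos
  have hint : IntervalIntegrable (fun τ => ⟪e τ, y τ⟫ - ν * ‖e τ‖ ^ 2)
      MeasureTheory.volume 0 t := (heyint t).sub ((heint t).const_mul ν)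
  -- `V'` need not be integrable, so the one-sided form of the fundamental theorem of calculus
  -- is used: only the upper bound of `V'` has to be integrable.
  have hV : V t - V 0 ≤ ∫ τ in (0 : ℝ)..t, (⟪e τ, y τ⟫ - ν * ‖e τ‖ ^ 2) :=
    intervalIntegral.sub_le_integral_of_hasDeriv_right_of_le ht.le
      (fun x hx => (hVderiv x hx.1).continuousAt.continuousWithinAt)
      (fun x hx => (hVderiv x hx.1.le).hasDerivWithinAt)
      ((intervalIntegrable_iff_integrableOn_Icc_of_le ht.le).1 hint)
      (fun x hx => hdiss x hx.1.le)
  rw [intervalIntegral.integral_sub (heyint t) ((heint t).const_mul ν),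
    intervalIntegral.integral_const_mul, hV0] at hV
  rw [le_div_iff₀ hpos]
  linarith [hVnonneg t ht.le]
end
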